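/- Suppose λ_0, …, λ_{ns−1} are pairwise distinct and satisfy the local constraints. Fix a ∈ {0,…,n/(s+1)−1} and a helper set H ⊆ {0,…,n−1} \ {a(s+1)+s} with |H| = d; let H_1 = H ∩ {a(s+1)+b : b ∈ {0,…,s−1}} and H_2 = H \ H_1. If two codewords C = (C_0,…,C_{n−1}) and C′ = (C′_0,…,C′_{n−1}) of the array code satisfy: (i) C_j(i) = C′_j(i) for every j = a(s+1)+b ∈ H_1 and every i ∈ {0,…,ℓ−1} with i_a = b, and (ii) Σ_{e=0}^{s−1} C_j(i + e·s^a) = Σ_{e=0}^{s−1} C′_j(i + e·s^a) for every j ∈ H_2 and every i ∈ {0,…,ℓ−1} with i_a = 0, then C_{a(s+1)+s} = C′_{a(s+1)+s}. In other words, the last node of group a can be repaired from any d helper nodes by downloading ℓ/s symbols from each helper, achieving the optimal repair bandwidth dℓ/(d−k+1). -/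

import Mathlib

open Matrix

/-- The `u`-th digit of `i` in base `s`. -/
def digit (s i u : ℕ) : ℕ := i / s ^ u % s

open scoped Classical in
/-- The `z`-th entry of the `(i,j)` block (a length-`t` column vector, `0 ≤ z < t`) of the
block matrix `A_{a,b}^{(t)}`; the group size is `g` (`g = s` for the first construction and
`g = s + 1` for the second), so the relevant `λ`-index is `a·s·g + b·s + j_a`. -/
noncomputable def Aent {F : Type*} [Field F] (lam : ℕ → F) (s g a b i j z : ℕ) : F :=
  if i = j then lam (a * s * g + b * s + digit s j a) ^ z
  else if digit s i a = b ∧ digit s j a ≠ b ∧ (∀ u, u ≠ a → digit s i u = digit s j u) then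
    -(lam (a * s * g + b * s + digit s j a) ^ z)
  else 0

/-- `A_{a,b}^{(t)}` as an `ℓt × ℓ` matrix; row `ρ` encodes block row `ρ / t` and
inner row `ρ % t`. -/
noncomputable def Amat {F : Type*} [Field F] (lam : ℕ → F) (s g ℓ a b t : ℕ) :
    Matrix (Fin (ℓ * t)) (Fin ℓ) F :=
  Matrix.of fun ρ j => Aent lam s g a b ((ρ : ℕ) / t) (j : ℕ) ((ρ : ℕ) % t)

/-- The `m`-th smallest element of the finite set `B ⊆ ℕ` (junk value `0` if `m ≥ |B|`). -/
def enum (B : Finset ℕ) (m : ℕ) : ℕ := (B.sort (· ≤ ·)).getD m 0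

/-- `A_{a,B}^{(t)} = [A_{a,b₁}^{(t)} | ⋯ | A_{a,b_v}^{(t)}]` as an `ℓt × ℓ|B|` matrix:
row `ρ` encodes block row `ρ / t` and inner row `ρ % t`; column `κ` selects the
`κ / ℓ`-th member of `B` and inner column `κ % ℓ`. -/
noncomputable def AmatB {F : Type*} [Field F] (lam : ℕ → F) (s g ℓ a t : ℕ) (B : Finset ℕ) :
    Matrix (Fin (ℓ * t)) (Fin (ℓ * B.card)) F :=
  Matrix.of fun ρ κ =>
    Aent lam s g a (enum B ((κ : ℕ) / ℓ)) ((ρ : ℕ) / t) ((κ : ℕ) % ℓ) ((ρ : ℕ) % t)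

/-- The local (in-group) constraints: every square matrix `A_{a,B}` (for a group index
`a < groups` and a nonempty `B ⊆ {0, …, g-1}`) is invertible. -/
def LocalConstraints {F : Type*} [Field F] (lam : ℕ → F) (s g ℓ groups : ℕ) : Prop :=
  ∀ a < groups, ∀ B ⊆ Finset.range g, B.Nonempty → (AmatB lam s g ℓ a B.card B).det ≠ 0

/-- Membership in the array code: `(C_0, …, C_{n−1})` satisfies the parity check equations
`Σ_{a,b} A_{a,b}^{(r)} · C_{a·g+b} = 0` (node `m = a·g + b`). -/
def InCode {F : Type*} [Field F] (lam : ℕ → F) (s g ℓ r n : ℕ) (C : ℕ → ℕ → F) : Prop :=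
  ∀ ρ < ℓ * r, ∑ m ∈ Finset.range n, ∑ j ∈ Finset.range ℓ,
    Aent lam s g (m / g) (m % g) (ρ / r) j (ρ % r) * C m j = 0

/-! By linearity it suffices to show that the node vanishes for a codeword whose downloaded data are
zero. Adding up the parity check equations over the `a`-th digit of the block row does two
things. In group `a`, the off-diagonal `-1`s cancel against the diagonal, so that node `b < s` only
contributes its symbols `C_j(i)` with `i_a = b`, the last node contributes all its symbols, and all
these unknowns occur with plain columns `(1, μ, …, μ ^ (r - 1))`. In the other groups every node
gets replaced by its sums over the `a`-th digit. Hence the nodes in `H` drop out, and at most `r`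
columns of unknowns are left.

The other groups are then eliminated one at a time. If `v` nodes of a group are missing, the local
constraint yields a monic `s × s` matrix polynomial `P` of degree `v` annihilating their kernel
matrices, so combining the checks according to `P` removes the group at the price of `v` checks.
This multiplies the remaining unknowns by values `P(μ)`, which are invertible: a row vector `w` with
`w P(μ) = 0` would make `w P / (X - μ)` a row of degree `< v` annihilated by the kernel matrices.
Once all groups are gone, Lagrange interpolation at the points `μ` isolates every unknown. -/

section AbstractCode

open Polynomial Finset
open Function (Injective update update_self update_of_ne update_idem update_comm)

variable {F β σ ι τ : Type*} [Field F]

/-- The kernel matrices `K_b^{(t)}` of one group of nodes, for all heights `t` at once: the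
`(i, j)` block of `K_b^{(t)}` is `coeff b i j` times the column `(1, μ, …, μ ^ (t - 1))` with
`μ = point b j`. Here `β` indexes the nodes of the group and `σ` the digits. -/
structure GroupKernel (F β σ : Type*) where
  coeff : β → Matrix σ σ F
  point : β → σ → F

namespace GroupKernel

variable [Fintype σ] (κ : GroupKernel F β σ) (B : Finset β)

/-- The product of a row vector with the `j`-th column of `K_b^{(t)}`; a block of `t` entries of the
row vector is encoded as the polynomial having these entries as coefficients. -/
def colEval (g : σ → F[X]) (b : β) (j : σ) : F :=
  ∑ i, κ.coeff b i j * (g i).eval (κ.point b j)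

/-- The polynomial form of the local constraint for `B`: the square matrix `[K_b^{(|B|)}]_{b ∈ B}`
has trivial left kernel. -/
def Unisolvent : Prop :=
  ∀ g : σ → F[X], (∀ i, (g i).degree < #B) → (∀ b ∈ B, ∀ j, κ.colEval g b j = 0) → g = 0

/-- A monic matrix polynomial of degree `|B|` whose rows are annihilated by all the kernel
matrices `K_b`, `b ∈ B`. -/
structure IsMonicAnnihilator [DecidableEq σ] (P : σ → σ → F[X]) : Prop where
  natDegree_le : ∀ i j, (P i j).natDegree ≤ #B
  coeff_card : ∀ i j, (P i j).coeff #B = (1 : Matrix σ σ F) i j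
  colEval_eq_zero : ∀ b ∈ B, ∀ i j, κ.colEval (P i) b j = 0

/-- The `j`-th column sum of the coefficients of `K_b`. -/
def colSum (b : β) (j : σ) : F := ∑ i, κ.coeff b i j

variable {κ B}

lemma unisolvent_empty : κ.Unisolvent ∅ := fun g hg _ =>
  funext fun i => by simpa using hg i

lemma Unisolvent.exists_interpolant (h : κ.Unisolvent B) (y : β → σ → F) :
    ∃ g : σ → F[X], (∀ i, (g i).degree < #B) ∧ ∀ b ∈ B, ∀ j, κ.colEval g b j = y b j := by
  let L : (σ → degreeLT F #B) →ₗ[F] (B → σ → F) :=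
    { toFun g b j := κ.colEval (fun i => g i) b j
      map_add' g g' := by ext; simp [colEval, mul_add, sum_add_distrib]
      map_smul' c g := by ext; simp [colEval, mul_sum, mul_left_comm] }
  have hL_inj : Injective L := (injective_iff_map_eq_zero L).2 fun g hg => by
    have hg0 := h (fun i => g i) (fun i => mem_degreeLT.1 (g i).2) fun b hb j =>
      congrFun₂ hg ⟨b, hb⟩ j
    exact funext fun i => Subtype.ext (congrFun hg0 i)
  have : Module.Finite F (degreeLT F #B) := .equiv (degreeLTEquiv F #B).symm
  have hfinrank : Module.finrank F (σ → degreeLT F #B) = Module.finrank F (B → σ → F) := by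
    simp [Module.finrank_pi_fintype, (degreeLTEquiv F #B).finrank_eq, mul_comm]
  obtain ⟨g, hg⟩ :=
    (LinearMap.injective_iff_surjective_of_finrank_eq_finrank hfinrank).1 hL_inj fun b => y b
  exact ⟨fun i => g i, fun i => mem_degreeLT.1 (g i).2, fun b hb j => congrFun₂ hg ⟨b, hb⟩ j⟩

lemma Unisolvent.exists_isMonicAnnihilator [DecidableEq σ] (h : κ.Unisolvent B) :
    ∃ P, κ.IsMonicAnnihilator B P := by
  choose R hR_degree hR_eval using fun i =>
    h.exists_interpolant fun b j => κ.coeff b i j * κ.point b j ^ #B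
  refine ⟨fun i j => C ((1 : Matrix σ σ F) i j) * X ^ #B - R i j, fun i j => ?_, fun i j => ?_,
    fun b hb i j => ?_⟩
  · exact natDegree_le_of_degree_le <|
      (degree_sub_le _ _).trans (max_le (degree_C_mul_X_pow_le _ _) (hR_degree i j).le)
  · simp [coeff_eq_zero_of_degree_lt (hR_degree i j)]
  · have hR := hR_eval i b hb j
    simp only [colEval] at hR ⊢
    simp [mul_sub, hR, Matrix.one_apply, apply_ite (eval _)]

lemma Unisolvent.eq_zero_of_isRoot (h : κ.Unisolvent B) {μ : F}
    (hμ : ∀ b ∈ B, ∀ j, μ ≠ κ.point b j) {f : σ → F[X]} (hf_deg : ∀ i, (f i).natDegree ≤ #B)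
    (hf : ∀ b ∈ B, ∀ j, κ.colEval f b j = 0) (hf_root : ∀ i, (f i).IsRoot μ) : f = 0 := by
  choose g hg using fun i => dvd_iff_isRoot.2 (hf_root i)
  have hg_deg (i : σ) : (g i).degree < #B := by
    rcases eq_or_ne (g i) 0 with h0 | h0
    · simp [h0]
    · have := hf_deg i
      rw [hg, natDegree_mul (X_sub_C_ne_zero μ) h0, natDegree_X_sub_C] at this
      rw [degree_eq_natDegree h0]
      exact_mod_cast Nat.lt_of_succ_le (by omega)
  have hg_eval : ∀ b ∈ B, ∀ j, κ.colEval g b j = 0 := fun b hb j => by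
    have hfg : κ.colEval f b j = (κ.point b j - μ) * κ.colEval g b j := by
      simp only [colEval, mul_sum]
      refine sum_congr rfl fun i _ => ?_
      rw [hg i, eval_mul, eval_sub, eval_X, eval_C]
      ring
    rw [hf b hb, eq_comm, mul_eq_zero] at hfg
    exact hfg.resolve_left (sub_ne_zero.2 (hμ b hb j).symm)
  have hg0 := h g hg_deg hg_eval
  exact funext fun i => by simp [hg i, hg0]

lemma IsMonicAnnihilator.det_eval_ne_zero [DecidableEq σ] {P : σ → σ → F[X]}
    (hP : κ.IsMonicAnnihilator B P) (h : κ.Unisolvent B) {μ : F}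
    (hμ : ∀ b ∈ B, ∀ j, μ ≠ κ.point b j) : (Matrix.of fun i j => (P i j).eval μ).det ≠ 0 := by
  intro hdet
  obtain ⟨w, hw_ne, hw⟩ := Matrix.exists_vecMul_eq_zero_iff.2 hdet
  let f : σ → F[X] := fun j => ∑ i, C (w i) * P i j
  have hf_colEval (b : β) (j : σ) : κ.colEval f b j = ∑ i, w i * κ.colEval (P i) b j := by
    simp only [colEval, f, eval_finsetSum, eval_mul, eval_C, mul_sum]
    rw [sum_comm]
    exact sum_congr rfl fun _ _ => sum_congr rfl fun _ _ => mul_left_comm _ _ _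
  have hf : f = 0 := by
    refine h.eq_zero_of_isRoot hμ (fun j => ?_) (fun b hb j => ?_) (fun j => ?_)
    · exact natDegree_sum_le_of_forall_le _ _ fun i _ =>
        (natDegree_C_mul_le _ _).trans (hP.natDegree_le i j)
    · simp [hf_colEval, hP.colEval_eq_zero b hb]
    · simpa [f, IsRoot, eval_finsetSum, Matrix.vecMul, dotProduct] using congrFun hw j
  refine hw_ne (funext fun j => ?_)
  simpa [f, hP.coeff_card, Matrix.one_apply] using
    congrArg (fun g : F[X] => g.coeff #B) (show f j = 0 from congrFun hf j)

end GroupKernel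

section ParityChecks

variable [Fintype σ] [DecidableEq ι]

/-- The action of the matrix `P(t)` on the `a`-th digit of a function of digit vectors. -/
def digitAct (P : σ → σ → F[X]) (a : ι) (t : F) (f : (ι → σ) → F) (x : ι → σ) : F :=
  ∑ i, (P (x a) i).eval t * f (update x a i)

lemma eq_zero_of_digitAct_eq_zero [DecidableEq σ] {P : σ → σ → F[X]} {a : ι} {t : F}
    {f : (ι → σ) → F} (hP : (Matrix.of fun i j => (P i j).eval t).det ≠ 0)
    (hf : digitAct P a t f = 0) : f = 0 := by
  funext x
  have hmulVec : (Matrix.of fun i j => (P i j).eval t) *ᵥ (fun i => f (update x a i)) = 0 := by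
    funext i
    simpa [digitAct, Matrix.mulVec, dotProduct] using congrFun hf (update x a i)
  simpa using congrFun (Matrix.eq_zero_of_mulVec_eq_zero hP hmulVec) (x a)

namespace GroupKernel

variable (κ : GroupKernel F β σ)

/-- The contribution of the nodes `B` of group `a` to the combination of the parity checks with
coefficient polynomial `p`, in the block row `x`. Block indices are digit vectors `x : ι → σ`, and
`D b` is the content of node `b`. -/
def syndrome (B : Finset β) (a : ι) (p : F[X]) (D : β → (ι → σ) → F) (x : ι → σ) : F :=
  ∑ b ∈ B, ∑ j, κ.coeff b (x a) j * (p.eval (κ.point b j) * D b (update x a j))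

lemma syndrome_of_subset {B B' : Finset β} {D : β → (ι → σ) → F} (hB : B ⊆ B')
    (hD : ∀ b ∈ B', b ∉ B → D b = 0) (a : ι) (p : F[X]) (x : ι → σ) :
    κ.syndrome B' a p D x = κ.syndrome B a p D x := by
  unfold syndrome
  refine (sum_subset hB fun b hb hb' => ?_).symm
  simp [hD b hb hb']

lemma syndrome_eq_sum_coeff (B : Finset β) (a : ι) {p : F[X]} {r : ℕ} (hp : p.natDegree < r)
    (D : β → (ι → σ) → F) (x : ι → σ) :
    κ.syndrome B a p D x = ∑ z ∈ range r, p.coeff z * κ.syndrome B a (X ^ z) D x := by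
  simp only [syndrome, mul_sum, eval_eq_sum_range' hp, sum_mul, eval_pow, eval_X]
  rw [sum_comm (s := range r)]
  refine sum_congr rfl fun b _ => ?_
  rw [sum_comm (s := range r)]
  exact sum_congr rfl fun j _ => sum_congr rfl fun z _ => by ring

lemma sum_syndrome_update_self (B : Finset β) (a : ι) (p : F[X]) (g : σ → F[X])
    (D : β → (ι → σ) → F) (x : ι → σ) :
    ∑ i, κ.syndrome B a (p * g i) D (update x a i) =
      ∑ b ∈ B, ∑ j, κ.colEval g b j * (p.eval (κ.point b j) * D b (update x a j)) := by
  simp only [syndrome, colEval, update_self, update_idem, eval_mul, sum_mul]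
  rw [sum_comm]
  refine sum_congr rfl fun b _ => ?_
  rw [sum_comm]
  exact sum_congr rfl fun j _ => sum_congr rfl fun i _ => by ring

lemma sum_syndrome_update_of_ne (B : Finset β) {a a' : ι} (ha : a' ≠ a) (p : F[X])
    (P : σ → σ → F[X]) (D : β → (ι → σ) → F) (x : ι → σ) :
    ∑ i, κ.syndrome B a' (p * P (x a) i) D (update x a i) =
      κ.syndrome B a' p (fun b y => digitAct P a (κ.point b (y a')) (D b) y) x := by
  simp only [syndrome, digitAct, update_self, update_of_ne ha, update_of_ne ha.symm, eval_mul,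
    mul_sum]
  rw [sum_comm]
  refine sum_congr rfl fun b _ => ?_
  rw [sum_comm]
  refine sum_congr rfl fun j _ => sum_congr rfl fun i _ => ?_
  rw [update_comm ha]
  ring

end GroupKernel

/-- A system of parity checks in which, besides the nodes `B a` of the groups `a ∈ G`, there are
nodes `c ∈ K` whose matrices are block diagonal with all the diagonal blocks equal to
`(1, μ c, …, μ c ^ (r - 1))`. The `r` checks are encoded as polynomials of degree `< r`. -/
def MixedParity (r : ℕ) (K : Finset τ) (μ : τ → F) (E : τ → (ι → σ) → F) (G : Finset ι)
    (κ : ι → GroupKernel F β σ) (B : ι → Finset β) (D : ι → β → (ι → σ) → F) : Prop :=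
  ∀ p : F[X], p.natDegree < r → ∀ x,
    ∑ c ∈ K, p.eval (μ c) * E c x + ∑ a ∈ G, (κ a).syndrome (B a) a p (D a) x = 0

variable {r : ℕ} {K : Finset τ} {μ : τ → F} {E : τ → (ι → σ) → F} {G : Finset ι}
  {κ : ι → GroupKernel F β σ} {B : ι → Finset β} {D : ι → β → (ι → σ) → F}

lemma MixedParity.eliminate [DecidableEq σ] {r' : ℕ} {a : ι} (ha : a ∉ G)
    (h : MixedParity r K μ E (insert a G) κ B D) {P : σ → σ → F[X]}
    (hP : (κ a).IsMonicAnnihilator (B a) P) (hr : r' + #(B a) ≤ r) :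
    MixedParity r' K μ (fun c => digitAct P a (μ c) (E c)) G κ B
      (fun a' b y => digitAct P a ((κ a').point b (y a')) (D a' b) y) := by
  intro p hp x
  have hcheck (i : σ) := h (p * P (x a) i)
    (natDegree_mul_le.trans_lt (by have := hP.natDegree_le (x a) i; omega)) (update x a i)
  have hdiag : ∑ i, ∑ c ∈ K, (p * P (x a) i).eval (μ c) * E c (update x a i) =
      ∑ c ∈ K, p.eval (μ c) * digitAct P a (μ c) (E c) x := by
    simp only [digitAct, eval_mul, mul_sum, mul_assoc]
    exact sum_comm
  have hself : ∑ i, (κ a).syndrome (B a) a (p * P (x a) i) (D a) (update x a i) = 0 := by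
    rw [(κ a).sum_syndrome_update_self]
    exact sum_eq_zero fun b hb => sum_eq_zero fun j _ => by
      rw [hP.colEval_eq_zero b hb, zero_mul]
  have hother := sum_congr rfl fun a' (ha' : a' ∈ G) =>
    (κ a').sum_syndrome_update_of_ne (B a') (ne_of_mem_of_not_mem ha' ha) p P (D a') x
  calc
    _ = ∑ i, ∑ c ∈ K, (p * P (x a) i).eval (μ c) * E c (update x a i) +
          ∑ a' ∈ insert a G, ∑ i,
            (κ a').syndrome (B a') a' (p * P (x a) i) (D a') (update x a i) := by
      rw [hdiag, sum_insert ha, hself, zero_add, hother]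
    _ = 0 := by
      rw [sum_comm (s := insert a G), ← sum_add_distrib]
      exact sum_eq_zero fun i _ => hcheck i

lemma MixedParity.eq_zero (hμ : Set.InjOn μ K) (hκ : ∀ a ∈ G, (κ a).Unisolvent (B a))
    (hμκ : ∀ c ∈ K, ∀ a ∈ G, ∀ b ∈ B a, ∀ j, μ c ≠ (κ a).point b j)
    (hr : #K + ∑ a ∈ G, #(B a) ≤ r) (h : MixedParity r K μ E G κ B D) :
    ∀ c ∈ K, E c = 0 := by
  classical
  induction G using Finset.induction_on generalizing r E D with
  | empty =>
    intro c hc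
    funext x
    have hcard := card_pos.2 ⟨c, hc⟩
    have hbasis := h (Lagrange.basis K μ c)
      (by rw [Lagrange.natDegree_basis hμ hc]; simp only [sum_empty] at hr; omega) x
    rw [sum_empty, add_zero, sum_eq_single_of_mem c hc fun c' hc' hne => by
      rw [Lagrange.eval_basis_of_ne hne.symm hc', zero_mul]] at hbasis
    rwa [Lagrange.eval_basis_self hμ hc, one_mul] at hbasis
  | insert a G ha ih =>
    rw [sum_insert ha] at hr
    simp only [forall_mem_insert] at hκ hμκ
    obtain ⟨P, hP⟩ := hκ.1.exists_isMonicAnnihilator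
    intro c hc
    refine eq_zero_of_digitAct_eq_zero (a := a) (hP.det_eval_ne_zero hκ.1 (hμκ c hc).1) ?_
    exact ih hκ.2 (fun c hc => (hμκ c hc).2) (r := r - #(B a)) (by omega)
      (h.eliminate ha hP (by omega)) c hc

section Repair

variable [Fintype β] [Fintype ι]

/-- Membership in the array code with group kernels `κ` and `r` parity checks. -/
def IsArrayCodeword (r : ℕ) (κ : ι → GroupKernel F β σ) (D : ι → β → (ι → σ) → F) : Prop :=
  ∀ p : F[X], p.natDegree < r → ∀ x, ∑ a, (κ a).syndrome univ a p (D a) x = 0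

lemma IsArrayCodeword.sum_update (h : IsArrayCodeword r κ D) (a : ι) {p : F[X]}
    (hp : p.natDegree < r) (x : ι → σ) :
    ∑ b, ∑ j, p.eval ((κ a).point b j) * ((κ a).colSum b j * D a b (update x a j)) +
      ∑ a' ∈ univ.erase a,
        (κ a').syndrome univ a' p (fun b y => ∑ e, D a' b (update y a e)) x = 0 := by
  have hself := (κ a).sum_syndrome_update_self univ a p 1 (D a) x
  have hother := sum_congr rfl fun a' (ha' : a' ∈ univ.erase a) =>
    (κ a').sum_syndrome_update_of_ne univ (ne_of_mem_erase ha') p (fun _ _ => 1) (D a') x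
  simp only [GroupKernel.colEval, digitAct, Pi.one_apply, eval_one, mul_one, one_mul]
    at hself hother
  simp only [GroupKernel.colSum, mul_left_comm (eval _ p)]
  calc
    _ = ∑ a', ∑ i, (κ a').syndrome univ a' p (D a') (update x a i) := by
      rw [← add_sum_erase _ _ (mem_univ a), hself, hother]
    _ = 0 := by
      rw [sum_comm]
      exact sum_eq_zero fun i _ => h p hp _

open scoped Classical in
theorem IsArrayCodeword.eq_zero_of_download_eq_zero (h : IsArrayCodeword r κ D) (a : ι)
    (missing : ι → Finset β)
    (hinj : Injective fun m : ι × β × σ => (κ m.1).point m.2.1 m.2.2)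
    (hκ : ∀ a' ≠ a, (κ a').Unisolvent (missing a'))
    (hr : ∑ b ∈ missing a, #{j | (κ a).colSum b j ≠ 0} + ∑ a' ∈ univ.erase a, #(missing a') ≤ r)
    (hsame : ∀ b ∉ missing a, ∀ j, (κ a).colSum b j ≠ 0 → ∀ x, D a b (update x a j) = 0)
    (hother : ∀ a' ≠ a, ∀ b ∉ missing a', ∀ x, ∑ e, D a' b (update x a e) = 0)
    {b : β} (hb : b ∈ missing a) {j : σ} (hj : (κ a).colSum b j ≠ 0) (x : ι → σ) :
    D a b (update x a j) = 0 := by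
  let K : Finset (Σ _ : β, σ) := (missing a).sigma fun b => {j | (κ a).colSum b j ≠ 0}
  let E : (Σ _ : β, σ) → (ι → σ) → F := fun c x =>
    (κ a).colSum c.1 c.2 * D a c.1 (update x a c.2)
  have hparity : MixedParity r K (fun c => (κ a).point c.1 c.2) E (univ.erase a) κ missing
      (fun a' b y => ∑ e, D a' b (update y a e)) := by
    intro p hp x
    rw [← h.sum_update a hp x]
    congr 1
    · rw [sum_sigma, ← sum_subset (subset_univ (missing a))]
      · exact sum_congr rfl fun b _ => sum_subset (subset_univ _) fun j _ hj => by
          simp [E, show (κ a).colSum b j = 0 by simpa using hj]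
      · refine fun b _ hb => sum_eq_zero fun j _ => ?_
        by_cases hj : (κ a).colSum b j = 0
        · simp [hj]
        · simp [hsame b hb j hj]
    · refine sum_congr rfl fun a' ha' => ((κ a').syndrome_of_subset (subset_univ _) ?_ a' p x).symm
      exact fun b _ hb => funext (hother a' (ne_of_mem_erase ha') b hb)
  have hE : E ⟨b, j⟩ = 0 := by
    refine hparity.eq_zero ?_ (fun a' ha' => hκ a' (ne_of_mem_erase ha')) ?_ ?_ ⟨b, j⟩ ?_
    · rintro ⟨b, j⟩ - ⟨b', j'⟩ - hpoint
      have := @hinj (a, b, j) (a, b', j') hpoint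
      simp_all
    · rintro ⟨b, j⟩ - a' ha' b' - j' hpoint
      exact ne_of_mem_erase ha' (congrArg Prod.fst (@hinj (a, b, j) (a', b', j') hpoint)).symm
    · rwa [card_sigma]
    · simpa [K] using ⟨hb, hj⟩
  exact (mul_eq_zero.1 (congrFun hE x)).resolve_left hj

end Repair

end ParityChecks

end AbstractCode

section Digits

open Finset
open Function (Injective update update_self update_of_ne update_eq_iff)

variable {N s t : ℕ}

/-- The integer whose base-`s` digits, least significant first, are the entries of `x`. -/
def encode (x : Fin N → Fin s) : ℕ := finFunctionFinEquiv x

lemma encode_lt (x : Fin N → Fin s) : encode x < s ^ N := (finFunctionFinEquiv x).2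

lemma exists_encode_eq {i : ℕ} (hi : i < s ^ N) : ∃ x : Fin N → Fin s, encode x = i :=
  ⟨finFunctionFinEquiv.symm ⟨i, hi⟩, by simp [encode]⟩

lemma encode_injective : Injective (encode : (Fin N → Fin s) → ℕ) :=
  Fin.val_injective.comp finFunctionFinEquiv.injective

lemma digit_encode (x : Fin N → Fin s) (u : Fin N) : digit s (encode x) u = x u :=
  congrArg Fin.val (congrFun (finFunctionFinEquiv.symm_apply_apply x) u)

lemma digit_encode_of_le (x : Fin N → Fin s) {u : ℕ} (hu : N ≤ u) : digit s (encode x) u = 0 := by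
  rcases s.eq_zero_or_pos with rfl | hs
  · rcases N.eq_zero_or_pos with rfl | hN
    · simp [digit, encode]
    · exact (x ⟨0, hN⟩).elim0
  · rw [digit, Nat.div_eq_of_lt ((encode_lt x).trans_le (Nat.pow_le_pow_right hs hu)), Nat.zero_mod]

lemma digit_encode_eq_iff {x y : Fin N → Fin s} {a : Fin N} :
    (∀ u : ℕ, u ≠ a → digit s (encode x) u = digit s (encode y) u) ↔ update x a (y a) = y := by
  rw [update_eq_iff, and_iff_right rfl]
  refine ⟨fun h u hu => Fin.ext ?_, fun h u hu => ?_⟩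
  · simpa only [digit_encode] using h u (Fin.val_ne_of_ne hu)
  · rcases lt_or_ge u N with huN | huN
    · lift u to Fin N using huN
      rw [digit_encode, digit_encode, h u (ne_of_apply_ne _ hu)]
    · rw [digit_encode_of_le x huN, digit_encode_of_le y huN]

lemma encode_update [NeZero s] (x : Fin N → Fin s) (a : Fin N) (e : Fin s) :
    encode (update x a e) = encode (update x a 0) + e * s ^ (a : ℕ) := by
  have hrest (e : Fin s) : ∑ u ∈ univ.erase a, (update x a e u : ℕ) * s ^ (u : ℕ) =
      ∑ u ∈ univ.erase a, (x u : ℕ) * s ^ (u : ℕ) :=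
    sum_congr rfl fun u hu => by rw [update_of_ne (ne_of_mem_erase hu)]
  simp only [encode, finFunctionFinEquiv_apply]
  rw [← add_sum_erase _ _ (mem_univ a), ← add_sum_erase _ _ (mem_univ a), hrest, hrest]
  simp [add_comm]

variable {M : Type*} [AddCommMonoid M]

lemma sum_range_encode (f : ℕ → M) :
    ∑ i ∈ range (s ^ N), f i = ∑ x : Fin N → Fin s, f (encode x) := by
  rw [sum_range]
  exact (finFunctionFinEquiv.sum_comp fun i => f i).symm

lemma update_apply_eq_comm {ι σ : Type*} [DecidableEq ι] {a : ι} {x y : ι → σ} :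
    update x a (y a) = y ↔ update y a (x a) = x := by
  simp only [update_eq_iff, true_and]
  exact forall₂_congr fun u _ => eq_comm

lemma sum_ite_update_eq {ι σ : Type*} [DecidableEq ι] [Fintype ι] [DecidableEq σ] [Fintype σ]
    (a : ι) (x : ι → σ) (f : (ι → σ) → M) :
    ∑ y, (if update x a (y a) = y then f y else 0) = ∑ i, f (update x a i) := by
  rw [← sum_filter]
  refine (sum_nbij' (update x a) (fun y => y a) ?_ ?_ ?_ ?_ ?_).symm <;> simp

lemma sum_range_mul (f : ℕ → M) :
    ∑ m ∈ range (N * t), f m = ∑ a : Fin N, ∑ b : Fin t, f (a * t + b) := by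
  rw [sum_range, ← finProdFinEquiv.sum_comp, Fintype.sum_prod_type]
  simp [finProdFinEquiv, add_comm, mul_comm]

/-- The pair (block row `x`, inner row `z`) as a row index of the block matrices `A_{a,b}^{(t)}`. -/
def rowEquiv (N s t : ℕ) : (Fin N → Fin s) × Fin t ≃ Fin (s ^ N * t) :=
  (finFunctionFinEquiv.prodCongr (Equiv.refl _)).trans finProdFinEquiv

lemma rowEquiv_div (q : (Fin N → Fin s) × Fin t) : (rowEquiv N s t q : ℕ) / t = encode q.1 :=
  congrArg (fun p : Fin (s ^ N) × Fin t => (p.1 : ℕ)) (finProdFinEquiv.symm_apply_apply _)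

lemma rowEquiv_mod (q : (Fin N → Fin s) × Fin t) : (rowEquiv N s t q : ℕ) % t = q.2 :=
  congrArg (fun p : Fin (s ^ N) × Fin t => (p.2 : ℕ)) (finProdFinEquiv.symm_apply_apply _)

end Digits

section Construction

open Polynomial Finset
open Function (Injective update update_self update_eq_self)

variable {F : Type*} [Field F] {lam : ℕ → F} {N s g r : ℕ}

/-- The kernel matrices `K_{a,0}, …, K_{a,g-1}` of the `a`-th group of nodes. -/
def localKernel (lam : ℕ → F) (s g a : ℕ) : GroupKernel F (Fin g) (Fin s) where
  coeff b := Matrix.of fun i j => if i = j then 1 else if (i : ℕ) = b then -1 else 0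
  point b j := lam (a * s * g + b * s + j)

lemma Aent_encode (a : Fin N) (b : Fin g) (x y : Fin N → Fin s) (z : ℕ) :
    Aent lam s g a b (encode x) (encode y) z =
      if update x a (y a) = y then
        (localKernel lam s g a).coeff b (x a) (y a) * (localKernel lam s g a).point b (y a) ^ z
      else 0 := by
  simp only [Aent, encode_injective.eq_iff, digit_encode_eq_iff, digit_encode, localKernel,
    of_apply]
  by_cases hxy : update x a (y a) = y
  · have hx : x = y ↔ x a = y a :=
      ⟨fun h => congrFun h a, fun h => by rwa [← h, update_eq_self] at hxy⟩
    rw [if_pos hxy]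
    simp only [hx, hxy, and_true]
    split_ifs with h1 h2 h3 h3
    · exact (one_mul _).symm
    · exact (neg_one_mul _).symm
    · exact absurd h2.1 h3
    · exact absurd ⟨h3, fun h => h1 (Fin.ext (h3.trans h.symm))⟩ h2
    · exact (zero_mul _).symm
  · have hx : x ≠ y := by
      rintro rfl
      exact hxy (update_eq_self a x)
    simp [hx, hxy]

lemma enum_mem {B : Finset ℕ} {m : ℕ} (hm : m < #B) : enum B m ∈ B := by
  rw [enum, List.getD_eq_getElem _ _ (by rwa [length_sort])]
  exact (mem_sort (· ≤ ·)).1 (List.getElem_mem _)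

lemma vecMul_AmatB_eq_zero {t : ℕ} {a : Fin N} {B : Finset (Fin g)} {p : Fin s → F[X]}
    (hdeg : ∀ i, (p i).degree < t)
    (hp : ∀ b ∈ B, ∀ j, (localKernel lam s g a).colEval p b j = 0) :
    (fun ρ => let q := (rowEquiv N s t).symm ρ; (p (q.1 a)).coeff q.2) ᵥ*
      AmatB lam s g (s ^ N) a t (B.map Fin.valEmbedding) = 0 := by
  funext col
  obtain ⟨y, hy⟩ : ∃ y : Fin N → Fin s, encode y = col % s ^ N :=
    exists_encode_eq (Nat.mod_lt _ (Nat.pos_of_mul_pos_right (Nat.zero_lt_of_lt col.2)))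
  obtain ⟨b, hb, hb_eq⟩ := mem_map.1 (enum_mem (Nat.div_lt_of_lt_mul col.2))
  have heval (i : Fin s) (μ : F) : ∑ z : Fin t, (p i).coeff z * μ ^ (z : ℕ) = (p i).eval μ := by
    rw [Polynomial.eval_eq_sum_degreeLTEquiv (mem_degreeLT.2 (hdeg i))]
    rfl
  calc
    _ = ∑ x : Fin N → Fin s, ∑ z : Fin t, (p (x a)).coeff z *
          Aent lam s g a b (encode x) (encode y) z := by
      simp only [vecMul, dotProduct, AmatB, of_apply]
      rw [← (rowEquiv N s t).sum_comp, Fintype.sum_prod_type, ← hb_eq, hy]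
      simp [rowEquiv_div, rowEquiv_mod]
    _ = ∑ x : Fin N → Fin s, if update y a (x a) = x then
          (localKernel lam s g a).coeff b (x a) (y a) *
            (p (x a)).eval ((localKernel lam s g a).point b (y a)) else 0 := by
      refine sum_congr rfl fun x _ => ?_
      simp only [Aent_encode, update_apply_eq_comm (x := x), mul_ite, mul_zero]
      split_ifs
      · simp only [← heval, mul_sum, mul_left_comm]
      · exact sum_const_zero
    _ = 0 := by
      rw [sum_ite_update_eq]
      simpa [GroupKernel.colEval] using hp b hb (y a)

lemma unisolvent_localKernel {a : Fin N}
    (hloc : ∀ B ⊆ range g, B.Nonempty → (AmatB lam s g (s ^ N) a #B B).det ≠ 0)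
    (B : Finset (Fin g)) : (localKernel lam s g a).Unisolvent B := by
  rcases B.eq_empty_or_nonempty with rfl | hB
  · exact GroupKernel.unisolvent_empty
  intro p hdeg hp
  have hdet := hloc (B.map Fin.valEmbedding)
    (fun _ hb => by obtain ⟨b, -, rfl⟩ := mem_map.1 hb; simp) (hB.map)
  simp only [← card_map Fin.valEmbedding (s := B)] at hdeg
  have hw := Matrix.eq_zero_of_vecMul_eq_zero hdet (vecMul_AmatB_eq_zero hdeg hp)
  funext i
  ext z
  rcases lt_or_ge z #(B.map Fin.valEmbedding) with hz | hz
  · simpa using congrFun hw (rowEquiv N s _ (fun _ => i, ⟨z, hz⟩))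
  · exact coeff_eq_zero_of_degree_lt ((hdeg i).trans_le (by exact_mod_cast hz))

lemma InCode.sub {s g ℓ r n : ℕ} {C C' : ℕ → ℕ → F} (h : InCode lam s g ℓ r n C)
    (h' : InCode lam s g ℓ r n C') : InCode lam s g ℓ r n (C - C') := fun ρ hρ => by
  simp only [Pi.sub_apply, mul_sub, sum_sub_distrib, h ρ hρ, h' ρ hρ, sub_self]

lemma InCode.isArrayCodeword {C : ℕ → ℕ → F} (h : InCode lam s g (s ^ N) r (N * g) C) :
    IsArrayCodeword r (fun a : Fin N => localKernel lam s g a)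
      (fun a b x => C (a * g + b) (encode x)) := by
  have hmonomial (z : ℕ) (hz : z < r) (x : Fin N → Fin s) : ∑ a : Fin N,
      (localKernel lam s g a).syndrome univ a (X ^ z) (fun b x => C (a * g + b) (encode x)) x =
        0 := by
    have hrow := h (rowEquiv N s r (x, ⟨z, hz⟩)) (Fin.is_lt _)
    rw [rowEquiv_div, rowEquiv_mod, sum_range_mul] at hrow
    rw [← hrow]
    refine sum_congr rfl fun a _ => sum_congr rfl fun b _ => ?_
    have hdiv : ((a : ℕ) * g + b) / g = a := by
      rw [mul_comm, Nat.mul_add_div b.pos, Nat.div_eq_of_lt b.2, add_zero]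
    have hmod : ((a : ℕ) * g + b) % g = b := by
      rw [mul_comm, Nat.mul_add_mod, Nat.mod_eq_of_lt b.2]
    rw [hdiv, hmod, sum_range_encode]
    simp only [Aent_encode, ite_mul, zero_mul]
    rw [sum_ite_update_eq]
    simp [mul_assoc]
  intro p hp x
  simp only [GroupKernel.syndrome_eq_sum_coeff _ _ _ hp]
  rw [sum_comm]
  simp only [← mul_sum]
  exact sum_eq_zero fun z hz => by rw [hmonomial z (mem_range.1 hz), mul_zero]

lemma localKernel_point_injective (hlam : Set.InjOn lam (Set.Iio (N * g * s))) :
    Injective fun m : Fin N × Fin g × Fin s => (localKernel lam s g m.1).point m.2.1 m.2.2 := by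
  let e : Fin N × Fin g × Fin s ≃ Fin (N * g * s) :=
    (Equiv.prodAssoc _ _ _).symm.trans ((finProdFinEquiv.prodCongr (.refl _)).trans finProdFinEquiv)
  have hpoint (m : Fin N × Fin g × Fin s) :
      (localKernel lam s g m.1).point m.2.1 m.2.2 = lam (e m) := by
    refine congrArg lam (?_ : (m.1 : ℕ) * s * g + m.2.1 * s + m.2.2 = e m)
    simp only [e, Equiv.trans_apply, Equiv.prodAssoc_symm_apply, Equiv.prodCongr_apply,
      Prod.map_apply, Equiv.refl_apply, finProdFinEquiv_apply_val]
    ring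
  intro m m' h
  simp only [hpoint] at h
  exact e.injective (Fin.ext (hlam (e m).2 (e m').2 h))

lemma localKernel_colSum (a : ℕ) (b : Fin g) (j : Fin s) :
    (localKernel lam s g a).colSum b j = if (b : ℕ) = j ∨ s ≤ b then 1 else 0 := by
  simp only [GroupKernel.colSum, localKernel, of_apply]
  split_ifs with hb
  · rw [sum_eq_single_of_mem j (mem_univ j) fun i _ hij => ?_, if_pos rfl]
    rw [if_neg hij, if_neg (by have := i.2; omega)]
  · obtain ⟨hbj, hbs⟩ := not_or.1 hb
    have hne : j ≠ ⟨b, not_le.1 hbs⟩ := fun h => hbj (congrArg Fin.val h).symm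
    rw [sum_eq_add_of_mem j _ (mem_univ j) (mem_univ _) hne fun i _ hi => ?_]
    · simp [hne.symm]
    · rw [if_neg hi.1, if_neg fun h => hi.2 (Fin.ext h)]

lemma localKernel_colSum_ne_zero_iff {a : ℕ} {b : Fin g} {j : Fin s} :
    (localKernel lam s g a).colSum b j ≠ 0 ↔ (b : ℕ) = j ∨ s ≤ b := by
  rw [localKernel_colSum]
  exact one_ne_zero.ite_ne_right_iff

open scoped Classical in
lemma sum_card_localKernel_colSum_ne_zero (a : ℕ) {B : Finset (Fin (s + 1))}
    (hB : Fin.last s ∈ B) :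
    ∑ b ∈ B, #{j | (localKernel lam s (s + 1) a).colSum b j ≠ 0} + 1 = #B + s := by
  have hlast : #{j | (localKernel lam s (s + 1) a).colSum (Fin.last s) j ≠ 0} = s := by
    simp [localKernel_colSum_ne_zero_iff]
  have hone (b) (hb : b ∈ B.erase (Fin.last s)) :
      #{j | (localKernel lam s (s + 1) a).colSum b j ≠ 0} = 1 := by
    obtain ⟨i, rfl⟩ := Fin.exists_castSucc_eq.2 (ne_of_mem_erase hb)
    simp [localKernel_colSum_ne_zero_iff, i.2.not_ge, Fin.val_inj, filter_eq]
  rw [← add_sum_erase _ _ hB, hlast, sum_congr rfl hone, sum_const, card_erase_of_mem hB]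
  have := card_pos.2 ⟨_, hB⟩
  simp only [smul_eq_mul, mul_one]
  omega

lemma sum_card_missing_add_card {H : Finset ℕ} (hH : H ⊆ range (N * g)) :
    ∑ a : Fin N, #{b : Fin g | (a : ℕ) * g + b ∉ H} + #H = N * g := by
  simp only [card_filter]
  rw [← sum_range_mul (fun m => if m ∉ H then 1 else 0), ← card_filter, filter_notMem_eq_sdiff,
    card_sdiff_add_card_eq_card hH, card_range]

theorem InCode.eq_zero_of_download_eq_zero {C : ℕ → ℕ → F}
    (hC : InCode lam s (s + 1) (s ^ N) r (N * (s + 1)) C)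
    (hlam : Set.InjOn lam (Set.Iio (N * (s + 1) * s))) {a : Fin N}
    (hloc : ∀ a' < N, a' ≠ a → ∀ B ⊆ range (s + 1), B.Nonempty →
      (AmatB lam s (s + 1) (s ^ N) a' #B B).det ≠ 0)
    {H : Finset ℕ} (hHsub : H ⊆ range (N * (s + 1))) (hHnotin : a * (s + 1) + s ∉ H)
    (hr : N * (s + 1) + s ≤ r + #H + 1)
    (hsame : ∀ b < s, a * (s + 1) + b ∈ H →
      ∀ i < s ^ N, digit s i a = b → C (a * (s + 1) + b) i = 0)
    (hother : ∀ a' < N, a' ≠ a → ∀ b ≤ s, a' * (s + 1) + b ∈ H →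
      ∀ i < s ^ N, digit s i a = 0 →
        ∑ e ∈ range s, C (a' * (s + 1) + b) (i + e * s ^ (a : ℕ)) = 0)
    {i : ℕ} (hi : i < s ^ N) : C (a * (s + 1) + s) i = 0 := by
  obtain ⟨x, rfl⟩ := exists_encode_eq hi
  have : NeZero s := ⟨(x a).pos.ne'⟩
  let missing (a' : Fin N) : Finset (Fin (s + 1)) := {b | (a' : ℕ) * (s + 1) + b ∉ H}
  have hlast : Fin.last s ∈ missing a := by simpa [missing] using hHnotin
  have hcolSum : (localKernel lam s (s + 1) a).colSum (Fin.last s) (x a) ≠ 0 :=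
    localKernel_colSum_ne_zero_iff.2 (.inr le_rfl)
  have hcard : ∑ a', #(missing a') + #H = N * (s + 1) := sum_card_missing_add_card hHsub
  rw [← add_sum_erase _ _ (mem_univ a)] at hcard
  have hcols := sum_card_localKernel_colSum_ne_zero (lam := lam) (a := a) hlast
  rw [← update_eq_self a x]
  refine hC.isArrayCodeword.eq_zero_of_download_eq_zero a missing
    (localKernel_point_injective hlam) (fun a' ha' => ?_) ?_ ?_ ?_ hlast hcolSum x
  · exact unisolvent_localKernel (hloc a' a'.2 (Fin.val_ne_of_ne ha')) _
  · omega
  · intro b hb j hj y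
    have hbH : a * (s + 1) + b ∈ H := by simpa [missing] using hb
    have hbs : (b : ℕ) < s := (Nat.lt_succ_iff_lt_or_eq.1 b.2).resolve_right fun h =>
      hHnotin (by rwa [h] at hbH)
    have hbj := (localKernel_colSum_ne_zero_iff.1 hj).resolve_right hbs.not_ge
    exact hsame b hbs hbH _ (encode_lt _) (by rw [digit_encode, update_self, hbj])
  · intro a' ha' b hb y
    have hbH : a' * (s + 1) + b ∈ H := by simpa [missing] using hb
    have hsum := hother a' a'.2 (Fin.val_ne_of_ne ha') b (Nat.le_of_lt_succ b.2) hbH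
      (encode (update y a 0)) (encode_lt _) (by rw [digit_encode, update_self, Fin.val_zero])
    simpa only [sum_range, ← encode_update] using hsum

end Construction

theorem statement15_general {F : Type*} [Field F] {n s r : ℕ} (hdiv : (s + 1) ∣ n)
    {lam : ℕ → F} (hdist : Set.InjOn lam (Set.Iio (n * s))) {a : ℕ} (ha : a < n / (s + 1))
    (hloc : ∀ a' < n / (s + 1), a' ≠ a → ∀ B ⊆ Finset.range (s + 1), B.Nonempty →
      (AmatB lam s (s + 1) (s ^ (n / (s + 1))) a' B.card B).det ≠ 0)
    {H : Finset ℕ} (hHsub : H ⊆ Finset.range n) (hHnotin : a * (s + 1) + s ∉ H)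
    (hr : n + s ≤ r + H.card + 1) {C C' : ℕ → ℕ → F}
    (hC : InCode lam s (s + 1) (s ^ (n / (s + 1))) r n C)
    (hC' : InCode lam s (s + 1) (s ^ (n / (s + 1))) r n C')
    (hagree₁ : ∀ j ∈ H, a * (s + 1) ≤ j → j < a * (s + 1) + s →
      ∀ i < s ^ (n / (s + 1)), digit s i a = j - a * (s + 1) → C j i = C' j i)
    (hagree₂ : ∀ j ∈ H, (j < a * (s + 1) ∨ a * (s + 1) + s ≤ j) →
      ∀ i < s ^ (n / (s + 1)), digit s i a = 0 →
        ∑ e ∈ Finset.range s, C j (i + e * s ^ a) = ∑ e ∈ Finset.range s, C' j (i + e * s ^ a)) :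
    ∀ i < s ^ (n / (s + 1)), C (a * (s + 1) + s) i = C' (a * (s + 1) + s) i := by
  intro i hi
  generalize hN : n / (s + 1) = N at *
  obtain rfl : n = N * (s + 1) := by rw [← hN, Nat.div_mul_cancel hdiv]
  lift a to Fin N using ha
  have hdiff := (hC.sub hC').eq_zero_of_download_eq_zero hdist hloc hHsub hHnotin hr
  refine sub_eq_zero.1 (hdiff ?_ ?_ hi)
  · intro b hb hbH i hi hdigit
    exact sub_eq_zero.2 (hagree₁ _ hbH (by omega) (by omega) i hi (by omega))
  · intro a' _ hne b hb hbH i hi hdigit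
    have hout : a' * (s + 1) + b < a * (s + 1) ∨ a * (s + 1) + s ≤ a' * (s + 1) + b := by
      rcases hne.lt_or_gt with h | h <;>
        · have hmul := Nat.mul_le_mul_right (s + 1) (Nat.succ_le_of_lt h)
          rw [Nat.succ_mul] at hmul
          omega
    simp only [Pi.sub_apply, Finset.sum_sub_distrib, sub_eq_zero]
    exact hagree₂ _ hbH hout i hi hdigit

/-- repair of the last node of a group, second construction, group size
`s+1`: helpers `j ∈ H₁` (in group `a`, so `j = a(s+1)+b` with `b < s`) provide the
symbols `C_j(i)` with `i_a = b`, and helpers `j ∈ H₂ = H \ H₁` provide the sums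
`Σ_{e<s} C_j(i + e·s^a)` for `i_a = 0`. If two codewords agree on all this downloaded
data, they agree on the whole node `a(s+1)+s`. -/
theorem statement15 (F : Type*) [Field F] [Fintype F] (n k d s ℓ r : ℕ)
    (hk : 1 ≤ k) (hkn : k < n) (hd₁ : k + 1 ≤ d) (hd₂ : d ≤ n - 1)
    (hs : s = d - k + 1) (hdiv : (s + 1) ∣ n) (hℓ : ℓ = s ^ (n / (s + 1))) (hr : r = n - k)
    (lam : ℕ → F)
    (hdist : ∀ i < n * s, ∀ j < n * s, lam i = lam j → i = j)
    (hloc : LocalConstraints lam s (s + 1) ℓ (n / (s + 1)))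
    (a : ℕ) (ha : a < n / (s + 1))
    (H : Finset ℕ) (hHsub : H ⊆ Finset.range n) (hHnotin : a * (s + 1) + s ∉ H)
    (hHcard : H.card = d)
    (C C' : ℕ → ℕ → F)
    (hC : InCode lam s (s + 1) ℓ r n C) (hC' : InCode lam s (s + 1) ℓ r n C')
    (hagree₁ : ∀ j ∈ H, a * (s + 1) ≤ j → j < a * (s + 1) + s →
      ∀ i < ℓ, digit s i a = j - a * (s + 1) → C j i = C' j i)
    (hagree₂ : ∀ j ∈ H, (j < a * (s + 1) ∨ a * (s + 1) + s ≤ j) →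
      ∀ i < ℓ, digit s i a = 0 →
        ∑ e ∈ Finset.range s, C j (i + e * s ^ a) =
          ∑ e ∈ Finset.range s, C' j (i + e * s ^ a)) :
    ∀ i < ℓ, C (a * (s + 1) + s) i = C' (a * (s + 1) + s) i := by
  subst hℓ
  exact statement15_general hdiv hdist ha (fun a' ha' _ => hloc a' ha') hHsub hHnotin (by omega)
    hC hC' hagree₁ hagree₂
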